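/- (Monotonicity in β of the boundary-layer marginal.) Let G = (V,E) be a connected graph of degree bounded by D > 0, with nearest-neighbour ferromagnetic interactions, and let ρ be an even measure on ℝ with 0 < ∫_ℝ e^{a|u|²}dρ(u) < ∞ for all a > 0. Fix a finite Λ ⊂ V and let ρ̃ be the vertex-dependent single-site measure equal to ζ_{a,B} on ∂Λ and to ρ on Λ∖∂Λ (with a = 8βD-type constants fixed; a, B > 0 arbitrary fixed constants suffice, with dζ_{a,B}(u) = 1_{u ≥ B}dρ_a(u − B)). Then for any β' ≥ β ≥ 0, the ∂Λ-marginal of ν^0_{Λ,β,ρ̃} is stochastically dominated by the ∂Λ-marginal of ν^0_{Λ,β',ρ̃}. -/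

import Mathlib

open MeasureTheory
open scoped ENNReal Classical

/-- The Hamiltonian `-H^ξ_{Λ,J}` (already multiplied by `β`). -/
noncomputable def hamil {V : Type*} (J : V → V → ℝ) (β : ℝ) (Λ : Finset V)
    (ξ : V → ℝ) (φ : ↥Λ → ℝ) : ℝ :=
  β * ((1 / 2) * ∑ x : ↥Λ, ∑ y : ↥Λ,
      (if x.1 ≠ y.1 then J x.1 y.1 * φ x * φ y else 0)
    + ∑ x : ↥Λ, φ x * ∑' y : {y : V // y ∉ Λ}, J x.1 y.1 * ξ y.1)

/-- The finite-volume Gibbs measure on `ℝ^Λ` with vertex-dependent single-site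
measures `ρ̃_x`. -/
noncomputable def gibbsV {V : Type*} (J : V → V → ℝ) (β : ℝ) (ρF : V → Measure ℝ)
    (Λ : Finset V) (ξ : V → ℝ) : Measure (↥Λ → ℝ) :=
  (((Measure.pi fun x : ↥Λ => ρF x.1).withDensity
      fun φ => ENNReal.ofReal (Real.exp (hamil J β Λ ξ φ))) Set.univ)⁻¹ •
    (Measure.pi fun x : ↥Λ => ρF x.1).withDensity
      fun φ => ENNReal.ofReal (Real.exp (hamil J β Λ ξ φ))

/-- The `Λ'`-marginal of a measure on `ℝ^Λ`, for `Λ' ⊆ Λ`. -/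
noncomputable def marg {V : Type*} {Λ' Λ : Finset V} (h : Λ' ⊆ Λ)
    (μ : Measure (↥Λ → ℝ)) : Measure (↥Λ' → ℝ) :=
  μ.map fun φ x => φ ⟨x.1, h x.2⟩

/-- The tilted single-site measure `dρ_b(u) = e^(b|u|²) dρ(u)`. -/
noncomputable def rhoMod (ρ : Measure ℝ) (b : ℝ) : Measure ℝ :=
  ρ.withDensity fun u => ENNReal.ofReal (Real.exp (b * u ^ 2))

/-- The shifted truncated single-site measure `dζ_{a,B}(u) = 1_{u ≥ B} dρ_a(u - B)`. -/
noncomputable def zetaM (ρ : Measure ℝ) (a B : ℝ) : Measure ℝ :=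
  ((rhoMod ρ a).map (fun u => u + B)).restrict (Set.Ici B)

/-- Nearest-neighbour interactions on a graph `G`. -/
noncomputable def Jnn {V : Type*} (G : SimpleGraph V) : V → V → ℝ :=
  fun x y => if G.Adj x y then 1 else 0

/-- `∂Λ`: the set of vertices of `Λ` adjacent to `V ∖ Λ`. -/
noncomputable def bdry {V : Type*} (G : SimpleGraph V) (Λ : Finset V) : Finset V :=
  Λ.filter fun x => ∃ y, y ∉ Λ ∧ G.Adj x y

/-- Stochastic domination. -/
def StochDom {ι : Type*} (μ ν : Measure (ι → ℝ)) : Prop :=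
  ∀ g : (ι → ℝ) → ℝ, Measurable g → Monotone g → (∃ K, ∀ φ, |g φ| ≤ K) →
    ∫ φ, g φ ∂μ ≤ ∫ φ, g φ ∂ν

/-! Take two independent copies `u`, `v` of the interior spins, with boundary values `x`, `y` at
inverse temperatures `β'`, `β`, and compare with the boundary values `x ⊔ y`, `x ⊓ y`. For
nonnegative boundary spins the total interaction grows in the strong sense that the sum and the
difference of its new and old values are polynomials with nonnegative coefficients in `u + v` and
`u - v` (Ginibre). This passes to exponentials, and averaging a monomial in `u + v`, `u - v` over
the negation and the exchange of the two copies at each even site gives something nonnegative.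
Integrating out the interior, the boundary weights therefore satisfy
`w_β' x * w_β y ≤ w_β' (x ⊔ y) * w_β (x ⊓ y)`, which is Holley's criterion for stochastic
domination; it is deduced from the four functions inequality, proved one coordinate at a time. -/

open scoped NNReal

section FourFunctions

lemma ennreal_add_le_add_of_mul_le_mul {a b c d : ℝ≥0∞} (hac : a ≤ c) (hbc : b ≤ c)
    (h : a * b ≤ c * d) : a + b ≤ c + d := by
  rcases eq_or_ne c ⊤ with rfl | hc
  · simp
  rcases eq_or_ne c 0 with rfl | hc₀
  · simp_all
  obtain ⟨p, rfl⟩ := exists_add_of_le hac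
  refine (ENNReal.mul_le_mul_iff_right hc₀ hc).1 ?_
  calc (a + p) * (a + b) = (a + p) * a + a * b + p * b := by ring
    _ ≤ (a + p) * a + (a + p) * d + p * (a + p) := by gcongr
    _ = (a + p) * (a + p + d) := by ring

lemma two_mul_lintegral_mul_lintegral {α : Type*} [MeasurableSpace α] {μ : Measure α} [SFinite μ]
    {f g : α → ℝ≥0∞} (hf : Measurable f) (hg : Measurable g) :
    2 * ((∫⁻ x, f x ∂μ) * ∫⁻ x, g x ∂μ) =
      ∫⁻ z, (f z.1 * g z.2 + f z.2 * g z.1) ∂(μ.prod μ) := by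
  rw [lintegral_add_left (by fun_prop), lintegral_prod_mul hf.aemeasurable hg.aemeasurable]
  simp_rw [mul_comm (f _) (g (Prod.fst _))]
  rw [lintegral_prod_mul hg.aemeasurable hf.aemeasurable, mul_comm (∫⁻ x, g x ∂μ), two_mul]

lemma lintegral_four_functions {α : Type*} [LinearOrder α] [MeasurableSpace α] {μ : Measure α}
    [SFinite μ] {f₁ f₂ f₃ f₄ : α → ℝ≥0∞} (hf₁ : Measurable f₁) (hf₂ : Measurable f₂)
    (hf₃ : Measurable f₃) (hf₄ : Measurable f₄) {S : Set α} (hS : ∀ᵐ x ∂μ, x ∈ S)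
    (h : ∀ x ∈ S, ∀ y ∈ S, f₁ x * f₂ y ≤ f₃ (x ⊔ y) * f₄ (x ⊓ y)) :
    (∫⁻ x, f₁ x ∂μ) * ∫⁻ x, f₂ x ∂μ ≤ (∫⁻ x, f₃ x ∂μ) * ∫⁻ x, f₄ x ∂μ := by
  have ordered : ∀ x ∈ S, ∀ y ∈ S, x ≤ y →
      f₁ x * f₂ y + f₁ y * f₂ x ≤ f₃ y * f₄ x + f₃ x * f₄ y := by
    intro x hx y hy hxy
    refine ennreal_add_le_add_of_mul_le_mul (by simpa [hxy] using h x hx y hy)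
      (by simpa [hxy] using h y hy x hx) ?_
    calc f₁ x * f₂ y * (f₁ y * f₂ x) = (f₁ x * f₂ x) * (f₁ y * f₂ y) := by ring
      _ ≤ (f₃ x * f₄ x) * (f₃ y * f₄ y) :=
        mul_le_mul' (by simpa using h x hx x hx) (by simpa using h y hy y hy)
      _ = f₃ y * f₄ x * (f₃ x * f₄ y) := by ring
  refine (ENNReal.mul_le_mul_iff_right two_ne_zero ENNReal.ofNat_ne_top).1 ?_
  rw [two_mul_lintegral_mul_lintegral hf₁ hf₂, two_mul_lintegral_mul_lintegral hf₃ hf₄]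
  refine lintegral_mono_ae ?_
  filter_upwards [Measure.quasiMeasurePreserving_fst.ae hS,
    Measure.quasiMeasurePreserving_snd.ae hS] with ⟨x, y⟩ hx hy
  rcases le_total x y with hxy | hxy
  · simpa only [add_comm (f₃ x * f₄ y)] using ordered x hx y hy hxy
  · simpa only [add_comm (f₁ x * f₂ y)] using ordered y hy x hx hxy

theorem lmarginal_four_functions {ι : Type*} [DecidableEq ι] {α : ι → Type*}
    [∀ i, LinearOrder (α i)] [∀ i, MeasurableSpace (α i)] (μ : ∀ i, Measure (α i))
    [∀ i, SigmaFinite (μ i)] {f₁ f₂ f₃ f₄ : (∀ i, α i) → ℝ≥0∞} (hf₁ : Measurable f₁)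
    (hf₂ : Measurable f₂) (hf₃ : Measurable f₃) (hf₄ : Measurable f₄) {s : Finset ι}
    {S : ∀ i, Set (α i)} (hS : ∀ i ∈ s, ∀ᵐ u ∂μ i, u ∈ S i)
    (h : ∀ x ∈ Set.univ.pi S, ∀ y ∈ Set.univ.pi S, f₁ x * f₂ y ≤ f₃ (x ⊔ y) * f₄ (x ⊓ y)) :
    ∀ x ∈ Set.univ.pi S, ∀ y ∈ Set.univ.pi S,
      lmarginal μ s f₁ x * lmarginal μ s f₂ y ≤
        lmarginal μ s f₃ (x ⊔ y) * lmarginal μ s f₄ (x ⊓ y) := by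
  induction s using Finset.induction_on with
  | empty => simpa using h
  | insert i s hi ih =>
    intro x hx y hy
    have measurable_slice {f : (∀ i, α i) → ℝ≥0∞} (hf : Measurable f) (x : ∀ i, α i) :
        Measurable fun u => lmarginal μ s f (Function.update x i u) :=
      (hf.lmarginal μ).comp (measurable_update x)
    rw [lmarginal_insert _ hf₁ hi, lmarginal_insert _ hf₂ hi, lmarginal_insert _ hf₃ hi,
      lmarginal_insert _ hf₄ hi]
    refine lintegral_four_functions (measurable_slice hf₁ _) (measurable_slice hf₂ _)
      (measurable_slice hf₃ _) (measurable_slice hf₄ _) (hS i (s.mem_insert_self i))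
      fun u hu v hv => ?_
    have update_mem {x : ∀ i, α i} (hx : x ∈ Set.univ.pi S) {u : α i} (hu : u ∈ S i) :
        Function.update x i u ∈ Set.univ.pi S :=
      (Set.update_mem_pi_iff_of_mem hx).2 fun _ => hu
    have update_sup : Function.update (x ⊔ y) i (u ⊔ v) =
        Function.update x i u ⊔ Function.update y i v := by
      ext j
      exact (Function.apply_update₂ (fun _ a b => a ⊔ b) x y i u v j).symm
    have update_inf : Function.update (x ⊓ y) i (u ⊓ v) =
        Function.update x i u ⊓ Function.update y i v := by
      ext j
      exact (Function.apply_update₂ (fun _ a b => a ⊓ b) x y i u v j).symm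
    rw [update_sup, update_inf]
    exact ih (fun j hj => hS j (Finset.mem_insert_of_mem hj)) _ (update_mem hx hu) _
      (update_mem hy hv)

end FourFunctions

section Holley

lemma lmarginal_mul_of_dependsOn {ι : Type*} [DecidableEq ι] {α : ι → Type*}
    [∀ i, MeasurableSpace (α i)] (μ : ∀ i, Measure (α i)) {s t : Finset ι} (hst : Disjoint s t)
    {k w : (∀ i, α i) → ℝ≥0∞} (hks : DependsOn k s) (hw : Measurable w) :
    lmarginal μ t (fun x => k x * w x) = fun x => k x * lmarginal μ t w x := by
  funext x
  have hk (u : ∀ i : t, α i) : k (Function.updateFinset x t u) = k x :=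
    hks fun i hi => by simp [Function.updateFinset, Finset.disjoint_left.1 hst hi]
  simp only [lmarginal, hk]
  exact lintegral_const_mul _ (hw.comp measurable_updateFinset)

lemma lintegral_mul_eq_lmarginal {ι : Type*} [Fintype ι] [DecidableEq ι] {α : ι → Type*}
    [∀ i, MeasurableSpace (α i)] (μ : ∀ i, Measure (α i)) [∀ i, SigmaFinite (μ i)] {s : Finset ι}
    {k w : (∀ i, α i) → ℝ≥0∞} (hk : Measurable k) (hw : Measurable w) (hks : DependsOn k s)
    (x₀ : ∀ i, α i) :
    ∫⁻ x, k x * w x ∂Measure.pi μ = lmarginal μ s (fun x => k x * lmarginal μ sᶜ w x) x₀ := by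
  rw [lintegral_eq_lmarginal_univ x₀, ← s.union_compl,
    lmarginal_union μ (fun x => k x * w x) (hk.mul hw) disjoint_compl_right,
    lmarginal_mul_of_dependsOn μ disjoint_compl_right hks hw]

lemma lintegral_mul_lintegral_le_of_lmarginal {ι : Type*} [Fintype ι] [DecidableEq ι]
    {α : ι → Type*} [∀ i, LinearOrder (α i)] [∀ i, MeasurableSpace (α i)]
    (μ : ∀ i, Measure (α i)) [∀ i, SigmaFinite (μ i)] {s : Finset ι} {S : ∀ i, Set (α i)}
    (hSne : ∀ i, (S i).Nonempty) (hS : ∀ i ∈ s, ∀ᵐ u ∂μ i, u ∈ S i)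
    {h w w' : (∀ i, α i) → ℝ≥0∞} (hh : Measurable h) (hw : Measurable w) (hw' : Measurable w')
    (hmono : ∀ x y, (∀ i ∈ s, x i ≤ y i) → h x ≤ h y)
    (hww' : ∀ x ∈ Set.univ.pi S, ∀ y ∈ Set.univ.pi S,
      lmarginal μ sᶜ w x * lmarginal μ sᶜ w' y ≤
        lmarginal μ sᶜ w' (x ⊔ y) * lmarginal μ sᶜ w (x ⊓ y)) :
    (∫⁻ x, h x * w x ∂Measure.pi μ) * ∫⁻ x, w' x ∂Measure.pi μ ≤
      (∫⁻ x, h x * w' x ∂Measure.pi μ) * ∫⁻ x, w x ∂Measure.pi μ := by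
  obtain ⟨x₀, hx₀⟩ := Set.univ_pi_nonempty_iff.2 hSne
  have hhs : DependsOn h s := fun x y hxy =>
    le_antisymm (hmono _ _ fun i hi => (hxy i hi).le) (hmono _ _ fun i hi => (hxy i hi).ge)
  have lintegral_eq {v : (∀ i, α i) → ℝ≥0∞} (hv : Measurable v) :
      ∫⁻ x, v x ∂Measure.pi μ = lmarginal μ s (lmarginal μ sᶜ v) x₀ := by
    simpa using lintegral_mul_eq_lmarginal μ measurable_one hv (fun _ _ _ => rfl) x₀
  rw [lintegral_mul_eq_lmarginal μ hh hw hhs x₀, lintegral_mul_eq_lmarginal μ hh hw' hhs x₀,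
    lintegral_eq hw, lintegral_eq hw']
  have main := lmarginal_four_functions μ (s := s) (f₁ := fun x => h x * lmarginal μ sᶜ w x)
    (f₂ := lmarginal μ sᶜ w') (f₃ := fun x => h x * lmarginal μ sᶜ w' x)
    (f₄ := lmarginal μ sᶜ w) (hh.mul (hw.lmarginal μ)) (hw'.lmarginal μ)
    (hh.mul (hw'.lmarginal μ)) (hw.lmarginal μ) hS (fun x hx y hy => ?_) x₀ hx₀ x₀ hx₀
  · simpa only [sup_idem, inf_idem] using main
  · calc h x * lmarginal μ sᶜ w x * lmarginal μ sᶜ w' y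
        = h x * (lmarginal μ sᶜ w x * lmarginal μ sᶜ w' y) := mul_assoc _ _ _
      _ ≤ h (x ⊔ y) * (lmarginal μ sᶜ w' (x ⊔ y) * lmarginal μ sᶜ w (x ⊓ y)) :=
        mul_le_mul' (hmono _ _ fun i _ => le_sup_left) (hww' x hx y hy)
      _ = h (x ⊔ y) * lmarginal μ sᶜ w' (x ⊔ y) * lmarginal μ sᶜ w (x ⊓ y) :=
        (mul_assoc _ _ _).symm

end Holley

section GinibreCone

variable {κ : Type*}

/-- The coordinates `u + v` and `u - v` at each site of a pair `(u, v)` of spin configurations, in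
which Ginibre's duplicated system is expanded; sums are indexed on the left, differences on the
right. -/
def sumDiff : κ ⊕ κ → (κ → ℝ × ℝ) → ℝ :=
  Sum.elim (fun i z => (z i).1 + (z i).2) fun i z => (z i).1 - (z i).2

variable (κ) in
/-- Ginibre's cone: the pointwise limits of polynomials with nonnegative coefficients in the
coordinates `u + v` and `u - v` of a pair of spin configurations. -/
noncomputable def ginibreCone : Subalgebra ℝ≥0 ((κ → ℝ × ℝ) → ℝ) :=
  (MvPolynomial.aeval (R := ℝ≥0) sumDiff).range.topologicalClosure

lemma isClosed_ginibreCone : IsClosed (ginibreCone κ : Set ((κ → ℝ × ℝ) → ℝ)) :=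
  Subalgebra.isClosed_topologicalClosure _

lemma sumDiff_mem_ginibreCone (i : κ ⊕ κ) : sumDiff i ∈ ginibreCone κ :=
  Subalgebra.le_topologicalClosure _ ⟨MvPolynomial.X i, MvPolynomial.aeval_X _ _⟩

/-- The symmetries of a pair `(u, v)` of copies of a single even spin: the first bit negates both
copies, the second exchanges them. -/
def siteFlip : Bool × Bool → ℝ × ℝ → ℝ × ℝ
  | (false, false), z => z
  | (true, false), z => -z
  | (false, true), z => z.swap
  | (true, true), z => -z.swap

lemma sum_siteFlip_pow_mul_pow_nonneg (z : ℝ × ℝ) (m n : ℕ) :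
    0 ≤ ∑ c, ((siteFlip c z).1 + (siteFlip c z).2) ^ m *
      ((siteFlip c z).1 - (siteFlip c z).2) ^ n := by
  have expand : ∑ c, ((siteFlip c z).1 + (siteFlip c z).2) ^ m *
      ((siteFlip c z).1 - (siteFlip c z).2) ^ n =
      ((z.1 + z.2) ^ m + (-(z.1 + z.2)) ^ m) * ((z.1 - z.2) ^ n + (-(z.1 - z.2)) ^ n) := by
    simp only [Fintype.sum_prod_type, Fintype.sum_bool, siteFlip, Prod.fst_neg, Prod.snd_neg,
      Prod.fst_swap, Prod.snd_swap]
    ring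
  have pow_add_neg_pow_nonneg (a : ℝ) (k : ℕ) : 0 ≤ a ^ k + (-a) ^ k := by
    rcases k.even_or_odd with hk | hk
    · simpa only [hk.neg_pow] using add_nonneg (hk.pow_nonneg a) (hk.pow_nonneg a)
    · simp only [hk.neg_pow, add_neg_cancel, le_refl]
  exact expand ▸ mul_nonneg (pow_add_neg_pow_nonneg _ _) (pow_add_neg_pow_nonneg _ _)

lemma sum_siteFlip_aeval_nonneg [Fintype κ] (P : MvPolynomial (κ ⊕ κ) ℝ≥0) (z : κ → ℝ × ℝ) :
    0 ≤ ∑ σ : κ → Bool × Bool,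
      MvPolynomial.aeval sumDiff P fun i => siteFlip (σ i) (z i) := by
  induction P using MvPolynomial.induction_on' with
  | monomial m r =>
    have factor (z : κ → ℝ × ℝ) : MvPolynomial.aeval sumDiff (MvPolynomial.monomial m r) z =
        r * ∏ i, ((z i).1 + (z i).2) ^ m (.inl i) * ((z i).1 - (z i).2) ^ m (.inr i) := by
      simp [MvPolynomial.aeval_monomial, Finsupp.prod_fintype, Fintype.prod_sum_type, sumDiff,
        Finset.prod_mul_distrib, Algebra.algebraMap_eq_smul_one, NNReal.smul_def]
    simp_rw [factor, ← Finset.mul_sum]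
    rw [← Fintype.piFinset_univ, Finset.sum_prod_piFinset Finset.univ fun i c =>
      ((siteFlip c (z i)).1 + (siteFlip c (z i)).2) ^ m (.inl i) *
        ((siteFlip c (z i)).1 - (siteFlip c (z i)).2) ^ m (.inr i)]
    exact mul_nonneg r.2 (Finset.prod_nonneg fun i _ => sum_siteFlip_pow_mul_pow_nonneg _ _ _)
  | add P Q hP hQ =>
    simpa only [map_add, Pi.add_apply, Finset.sum_add_distrib] using add_nonneg hP hQ

lemma sum_siteFlip_nonneg [Fintype κ] {F : (κ → ℝ × ℝ) → ℝ} (hF : F ∈ ginibreCone κ)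
    (z : κ → ℝ × ℝ) : 0 ≤ ∑ σ : κ → Bool × Bool, F fun i => siteFlip (σ i) (z i) := by
  have closed : IsClosed {F : (κ → ℝ × ℝ) → ℝ |
      0 ≤ ∑ σ : κ → Bool × Bool, F fun i => siteFlip (σ i) (z i)} :=
    isClosed_le continuous_const (by fun_prop)
  refine closure_minimal ?_ closed hF
  rintro _ ⟨P, rfl⟩
  exact sum_siteFlip_aeval_nonneg P z

lemma measurePreserving_siteFlip (μ : Measure ℝ) [SFinite μ] [μ.IsNegInvariant]
    (c : Bool × Bool) : MeasurePreserving (siteFlip c) (μ.prod μ) (μ.prod μ) := by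
  have neg : MeasurePreserving Neg.neg (μ.prod μ) (μ.prod μ) :=
    (Measure.measurePreserving_neg μ).prod (Measure.measurePreserving_neg μ)
  rcases c with ⟨_ | _, _ | _⟩
  · exact MeasurePreserving.id _
  · exact Measure.measurePreserving_swap
  · exact neg
  · exact neg.comp Measure.measurePreserving_swap

lemma lintegral_le_of_sum_comp_le {α σ : Type*} [MeasurableSpace α] [Fintype σ] [Nonempty σ]
    {μ : Measure α} {T : σ → α → α} (hT : ∀ s, MeasurePreserving (T s) μ μ) {f g : α → ℝ≥0∞}
    (hf : Measurable f) (hg : Measurable g) (h : ∀ x, ∑ s, f (T s x) ≤ ∑ s, g (T s x)) :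
    ∫⁻ x, f x ∂μ ≤ ∫⁻ x, g x ∂μ := by
  have average {f : α → ℝ≥0∞} (hf : Measurable f) :
      ∫⁻ x, ∑ s, f (T s x) ∂μ = Fintype.card σ * ∫⁻ x, f x ∂μ := by
    have hfT (s : σ) : Measurable fun x => f (T s x) := hf.comp (hT s).measurable
    rw [lintegral_finsetSum _ fun s _ => hfT s]
    simp [(hT _).lintegral_comp hf]
  refine (ENNReal.mul_le_mul_iff_right (a := Fintype.card σ) (by simp) (by simp)).1 ?_
  rw [← average hf, ← average hg]
  exact lintegral_mono h

lemma lintegral_le_of_sub_mem_ginibreCone [Fintype κ] (μ : κ → Measure ℝ) [∀ i, SigmaFinite (μ i)]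
    [∀ i, (μ i).IsNegInvariant] {f g : (κ → ℝ × ℝ) → ℝ} (hf : Measurable f) (hg : Measurable g)
    (hf₀ : 0 ≤ f) (hg₀ : 0 ≤ g) (hfg : g - f ∈ ginibreCone κ) :
    ∫⁻ z, ENNReal.ofReal (f z) ∂(Measure.pi fun i => (μ i).prod (μ i)) ≤
      ∫⁻ z, ENNReal.ofReal (g z) ∂(Measure.pi fun i => (μ i).prod (μ i)) := by
  refine lintegral_le_of_sum_comp_le
    (T := fun (σ : κ → Bool × Bool) (z : κ → ℝ × ℝ) i => siteFlip (σ i) (z i))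
    (fun σ => measurePreserving_pi _ _ fun i => measurePreserving_siteFlip (μ i) (σ i))
    hf.ennreal_ofReal hg.ennreal_ofReal fun z => ?_
  rw [← ENNReal.ofReal_sum_of_nonneg fun _ _ => hf₀ _,
    ← ENNReal.ofReal_sum_of_nonneg fun _ _ => hg₀ _]
  refine ENNReal.ofReal_le_ofReal (sub_nonneg.1 ?_)
  simpa only [Pi.sub_apply, Finset.sum_sub_distrib] using sum_siteFlip_nonneg hfg z

end GinibreCone

section DominatingPairs

variable {Z : Type*}

/-- The pairs `(f, g)` with `f + g ∈ K` and `f - g ∈ K`, that is, with `|g| ≤ f` for the order whose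
positive cone is `K`. -/
noncomputable def dominatingPairs (K : Subalgebra ℝ≥0 (Z → ℝ)) :
    Subalgebra ℝ≥0 ((Z → ℝ) × (Z → ℝ)) where
  carrier := {f | f.1 + f.2 ∈ K ∧ f.1 - f.2 ∈ K}
  mul_mem' {f g} hf hg := by
    have sum_eq : (f * g).1 + (f * g).2 = (1 / 2 : ℝ≥0) •
        ((f.1 + f.2) * (g.1 + g.2) + (f.1 - f.2) * (g.1 - g.2)) := by
      ext z
      simp [NNReal.smul_def]
      ring
    have sub_eq : (f * g).1 - (f * g).2 = (1 / 2 : ℝ≥0) •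
        ((f.1 + f.2) * (g.1 - g.2) + (f.1 - f.2) * (g.1 + g.2)) := by
      ext z
      simp [NNReal.smul_def]
      ring
    constructor
    · exact sum_eq ▸ K.smul_mem (K.add_mem (K.mul_mem hf.1 hg.1) (K.mul_mem hf.2 hg.2)) _
    · exact sub_eq ▸ K.smul_mem (K.add_mem (K.mul_mem hf.1 hg.2) (K.mul_mem hf.2 hg.1)) _
  add_mem' {f g} hf hg :=
    ⟨by simpa only [Prod.fst_add, Prod.snd_add, add_add_add_comm] using K.add_mem hf.1 hg.1,
      by simpa only [Prod.fst_add, Prod.snd_add, add_sub_add_comm] using K.add_mem hf.2 hg.2⟩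
  algebraMap_mem' r :=
    ⟨K.add_mem (K.algebraMap_mem r) (K.algebraMap_mem r),
      (sub_self (algebraMap ℝ≥0 (Z → ℝ) r)).symm ▸ K.zero_mem⟩

lemma mem_dominatingPairs {K : Subalgebra ℝ≥0 (Z → ℝ)} {f g : Z → ℝ} :
    (f, g) ∈ dominatingPairs K ↔ f + g ∈ K ∧ f - g ∈ K :=
  Iff.rfl

lemma smul_add_smul_mem {K : Subalgebra ℝ≥0 (Z → ℝ)} {f g : Z → ℝ}
    (hfg : (f, g) ∈ dominatingPairs K) {a b : ℝ} (hab : |b| ≤ a) : a • f + b • g ∈ K := by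
  obtain ⟨hba, hab⟩ := abs_le.1 hab
  lift (a + b) / 2 to ℝ≥0 using by linarith with p hp
  lift (a - b) / 2 to ℝ≥0 using by linarith with q hq
  have rotate : a • f + b • g = p • (f + g) + q • (f - g) := by
    ext z
    simp only [Pi.add_apply, Pi.sub_apply, Pi.smul_apply, smul_eq_mul, NNReal.smul_def, hp, hq]
    ring
  exact rotate ▸ K.add_mem (K.smul_mem hfg.1 p) (K.smul_mem hfg.2 q)

lemma smul_add_smul_mem_dominatingPairs {K : Subalgebra ℝ≥0 (Z → ℝ)} {f g : Z → ℝ}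
    (hfg : (f, g) ∈ dominatingPairs K) {a₁ a₂ b₁ b₂ : ℝ} (hadd : |a₂ + b₂| ≤ a₁ + b₁)
    (hsub : |a₂ - b₂| ≤ a₁ - b₁) : (a₁ • f + a₂ • g, b₁ • f + b₂ • g) ∈ dominatingPairs K := by
  rw [mem_dominatingPairs, add_add_add_comm, ← add_smul, ← add_smul, add_sub_add_comm, ← sub_smul,
    ← sub_smul]
  exact ⟨smul_add_smul_mem hfg hadd, smul_add_smul_mem hfg hsub⟩

lemma exp_sub_exp_mem {K : Subalgebra ℝ≥0 (Z → ℝ)} (hK : IsClosed (K : Set (Z → ℝ)))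
    {f g : Z → ℝ} (hfg : (f, g) ∈ dominatingPairs K) :
    (fun z => Real.exp (f z)) - (fun z => Real.exp (g z)) ∈ K := by
  have series : HasSum (fun n : ℕ => (n.factorial : ℝ≥0)⁻¹ • (f ^ n - g ^ n))
      ((fun z => Real.exp (f z)) - fun z => Real.exp (g z)) := by
    refine Pi.hasSum.2 fun z => ?_
    simpa [Real.exp_eq_exp_ℝ, NNReal.smul_def, mul_sub, div_eq_inv_mul] using
      (NormedSpace.expSeries_div_hasSum_exp (f z)).sub (NormedSpace.expSeries_div_hasSum_exp (g z))
  refine hK.mem_of_tendsto series (.of_forall fun s => K.sum_mem fun n _ => K.smul_mem ?_ _)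
  exact ((dominatingPairs K).pow_mem hfg n).2

lemma fst_snd_mem_dominatingPairs_ginibreCone {κ : Type*} (i : κ) :
    ((fun z => (z i).1, fun z => (z i).2) : ((κ → ℝ × ℝ) → ℝ) × ((κ → ℝ × ℝ) → ℝ)) ∈
      dominatingPairs (ginibreCone κ) :=
  ⟨sumDiff_mem_ginibreCone (.inl i), sumDiff_mem_ginibreCone (.inr i)⟩

theorem lintegral_exp_le_of_mem_dominatingPairs {κ : Type*} [Fintype κ] (μ : κ → Measure ℝ)
    [∀ i, SigmaFinite (μ i)] [∀ i, (μ i).IsNegInvariant] {f g : (κ → ℝ × ℝ) → ℝ}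
    (hf : Measurable f) (hg : Measurable g) (hfg : (f, g) ∈ dominatingPairs (ginibreCone κ)) :
    ∫⁻ z, ENNReal.ofReal (Real.exp (g z)) ∂(Measure.pi fun i => (μ i).prod (μ i)) ≤
      ∫⁻ z, ENNReal.ofReal (Real.exp (f z)) ∂(Measure.pi fun i => (μ i).prod (μ i)) :=
  lintegral_le_of_sub_mem_ginibreCone μ hg.exp hf.exp (fun _ => (Real.exp_pos _).le)
    (fun _ => (Real.exp_pos _).le) (exp_sub_exp_mem isClosed_ginibreCone hfg)

end DominatingPairs

section Ferromagnetic

lemma prod_add_prod_le_prod_sup_add_prod_inf {ι R : Type*} [CommRing R] [LinearOrder R]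
    [IsStrictOrderedRing R] (s : Finset ι) {a b : ι → R} (ha : ∀ i ∈ s, 0 ≤ a i)
    (hb : ∀ i ∈ s, 0 ≤ b i) :
    ∏ i ∈ s, a i + ∏ i ∈ s, b i ≤ ∏ i ∈ s, (a i ⊔ b i) + ∏ i ∈ s, (a i ⊓ b i) := by
  induction s using Finset.induction_on with
  | empty => simp
  | insert i s hi ih =>
    rw [Finset.forall_mem_insert] at ha hb
    have ha_le : ∏ i ∈ s, a i ≤ ∏ i ∈ s, (a i ⊔ b i) :=
      Finset.prod_le_prod ha.2 fun _ _ => le_sup_left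
    have hb_le : ∏ i ∈ s, b i ≤ ∏ i ∈ s, (a i ⊔ b i) :=
      Finset.prod_le_prod hb.2 fun _ _ => le_sup_right
    have ih := ih ha.2 hb.2
    simp only [Finset.prod_insert hi]
    rcases le_total (a i) (b i) with h | h
    · rw [sup_eq_right.2 h, inf_eq_left.2 h]
      linarith [mul_nonneg (sub_nonneg.2 h) (sub_nonneg.2 hb_le), mul_nonneg ha.1 (sub_nonneg.2 ih)]
    · rw [sup_eq_left.2 h, inf_eq_right.2 h]
      linarith [mul_nonneg (sub_nonneg.2 h) (sub_nonneg.2 ha_le), mul_nonneg hb.1 (sub_nonneg.2 ih)]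

lemma prod_pow_add_prod_pow_le_prod_sup_pow_add_prod_inf_pow {ι R : Type*} [CommRing R]
    [LinearOrder R] [IsStrictOrderedRing R] (s : Finset ι) (m : ι → ℕ) {x y : ι → R}
    (hx : ∀ i ∈ s, 0 ≤ x i) (hy : ∀ i ∈ s, 0 ≤ y i) :
    ∏ i ∈ s, x i ^ m i + ∏ i ∈ s, y i ^ m i ≤
      ∏ i ∈ s, (x ⊔ y) i ^ m i + ∏ i ∈ s, (x ⊓ y) i ^ m i := by
  have pow_monotoneOn (n : ℕ) : MonotoneOn (· ^ n : R → R) (Set.Ici 0) := pow_left_monotoneOn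
  convert prod_add_prod_le_prod_sup_add_prod_inf s (a := fun i => x i ^ m i)
    (b := fun i => y i ^ m i) (fun i hi => pow_nonneg (hx i hi) _)
    (fun i hi => pow_nonneg (hy i hi) _) using 2
  · exact Finset.prod_congr rfl fun i hi => (pow_monotoneOn (m i)).map_sup (hx i hi) (hy i hi)
  · exact Finset.prod_congr rfl fun i hi => (pow_monotoneOn (m i)).map_inf (hx i hi) (hy i hi)

lemma prod_pow_mem_dominatingPairs_ginibreCone {κ : Type*} [Fintype κ] (m : κ → ℕ) :
    ((fun z => ∏ i, (z i).1 ^ m i, fun z => ∏ i, (z i).2 ^ m i) :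
      ((κ → ℝ × ℝ) → ℝ) × ((κ → ℝ × ℝ) → ℝ)) ∈ dominatingPairs (ginibreCone κ) := by
  convert (dominatingPairs (ginibreCone κ)).prod_mem (t := Finset.univ) fun i _ =>
    (dominatingPairs (ginibreCone κ)).pow_mem (fst_snd_mem_dominatingPairs_ginibreCone i) (m i)
  all_goals simp [Prod.fst_prod, Prod.snd_prod]

lemma prod_pow_le_prod_pow {ι R : Type*} [CommSemiring R] [PartialOrder R] [IsOrderedRing R]
    (s : Finset ι) (m : ι → ℕ) {x y : ι → R} (hx : ∀ i ∈ s, 0 ≤ x i) (hxy : x ≤ y) :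
    ∏ i ∈ s, x i ^ m i ≤ ∏ i ∈ s, y i ^ m i :=
  Finset.prod_le_prod (fun i hi => pow_nonneg (hx i hi) _)
    fun i hi => pow_le_pow_left₀ (hx i hi) (hxy i) _

variable {ι : Type*}

lemma aeval_updateFinset_monomial [Fintype ι] [DecidableEq ι] (t : Finset ι) (x : ι → ℝ) (u : t → ℝ)
    (m : ι →₀ ℕ) (r : ℝ≥0) :
    MvPolynomial.aeval (Function.updateFinset x t u) (MvPolynomial.monomial m r) =
      (r * ∏ i ∈ tᶜ, x i ^ m i) * ∏ i : t, u i ^ m i := by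
  have inside : ∏ i ∈ t, Function.updateFinset x t u i ^ m i = ∏ i : t, u i ^ m i := by
    rw [← Finset.prod_coe_sort]
    exact Finset.prod_congr rfl fun i _ => by simp [Function.updateFinset]
  have outside : ∏ i ∈ tᶜ, Function.updateFinset x t u i ^ m i = ∏ i ∈ tᶜ, x i ^ m i :=
    Finset.prod_congr rfl fun i hi => by simp [Function.updateFinset, Finset.mem_compl.1 hi]
  rw [MvPolynomial.aeval_monomial, Finsupp.prod_fintype _ _ fun _ => pow_zero _,
    ← Finset.prod_mul_prod_compl t, inside, outside, mul_right_comm, mul_assoc]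
  rfl

lemma aeval_mem_dominatingPairs [Finite ι] [DecidableEq ι] (R : MvPolynomial ι ℝ≥0) (t : Finset ι)
    {x x' : ι → ℝ} (hx : ∀ i ∉ t, 0 ≤ x i) (hxx' : x ≤ x') :
    ((fun z => MvPolynomial.aeval (Function.updateFinset x' t fun i => (z i).1) R,
      fun z => MvPolynomial.aeval (Function.updateFinset x t fun i => (z i).1) R) :
      ((t → ℝ × ℝ) → ℝ) × ((t → ℝ × ℝ) → ℝ)) ∈ dominatingPairs (ginibreCone t) := by
  cases nonempty_fintype ι
  induction R using MvPolynomial.induction_on' with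
  | monomial m r =>
    simp only [aeval_updateFinset_monomial]
    have hx : ∀ i ∈ tᶜ, 0 ≤ x i := fun i hi => hx i (Finset.mem_compl.1 hi)
    have nonneg : 0 ≤ r * ∏ i ∈ tᶜ, x i ^ m i :=
      mul_nonneg r.2 (Finset.prod_nonneg fun i hi => pow_nonneg (hx i hi) _)
    have mono : r * ∏ i ∈ tᶜ, x i ^ m i ≤ r * ∏ i ∈ tᶜ, x' i ^ m i :=
      mul_le_mul_of_nonneg_left (prod_pow_le_prod_pow tᶜ m hx hxx') r.2
    have pair := smul_add_smul_mem_dominatingPairs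
      (prod_pow_mem_dominatingPairs_ginibreCone fun i : t => m i)
      (a₁ := r * ∏ i ∈ tᶜ, x' i ^ m i) (a₂ := 0) (b₁ := r * ∏ i ∈ tᶜ, x i ^ m i) (b₂ := 0)
      (by simpa using by linarith) (by simpa using mono)
    simpa only [zero_smul, add_zero] using! pair
  | add R S hR hS => simpa only [map_add] using! add_mem hR hS

lemma aeval_sup_add_aeval_inf_mem_dominatingPairs [Finite ι] [DecidableEq ι]
    (P : MvPolynomial ι ℝ≥0) (t : Finset ι) {x y : ι → ℝ} (hx : ∀ i ∉ t, 0 ≤ x i)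
    (hy : ∀ i ∉ t, 0 ≤ y i) :
    ((fun z => MvPolynomial.aeval (Function.updateFinset (x ⊔ y) t fun i => (z i).1) P +
        MvPolynomial.aeval (Function.updateFinset (x ⊓ y) t fun i => (z i).2) P,
      fun z => MvPolynomial.aeval (Function.updateFinset x t fun i => (z i).1) P +
        MvPolynomial.aeval (Function.updateFinset y t fun i => (z i).2) P) :
      ((t → ℝ × ℝ) → ℝ) × ((t → ℝ × ℝ) → ℝ)) ∈ dominatingPairs (ginibreCone t) := by
  cases nonempty_fintype ι
  induction P using MvPolynomial.induction_on' with
  | monomial m r =>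
    simp only [aeval_updateFinset_monomial]
    have hx : ∀ i ∈ tᶜ, 0 ≤ x i := fun i hi => hx i (Finset.mem_compl.1 hi)
    have hy : ∀ i ∈ tᶜ, 0 ≤ y i := fun i hi => hy i (Finset.mem_compl.1 hi)
    let c (w : ι → ℝ) : ℝ := r * ∏ i ∈ tᶜ, w i ^ m i
    have c_mono {v w : ι → ℝ} (hv : ∀ i ∈ tᶜ, 0 ≤ v i) (hvw : v ≤ w) : c v ≤ c w :=
      mul_le_mul_of_nonneg_left (prod_pow_le_prod_pow tᶜ m hv hvw) r.2
    have hxy : ∀ i ∈ tᶜ, 0 ≤ (x ⊓ y) i := fun i hi => le_inf (hx i hi) (hy i hi)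
    have supermodular : c x + c y ≤ c (x ⊔ y) + c (x ⊓ y) := by
      simpa only [c, ← mul_add] using! mul_le_mul_of_nonneg_left
        (prod_pow_add_prod_pow_le_prod_sup_pow_add_prod_inf_pow tᶜ m hx hy) r.2
    have c_nonneg : 0 ≤ c (x ⊓ y) :=
      mul_nonneg r.2 (Finset.prod_nonneg fun i hi => pow_nonneg (hxy i hi) _)
    have inf_le_left := c_mono hxy inf_le_left
    have inf_le_right := c_mono hxy inf_le_right
    exact smul_add_smul_mem_dominatingPairs
      (prod_pow_mem_dominatingPairs_ginibreCone fun i : t => m i)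
      (a₁ := c (x ⊔ y)) (a₂ := c (x ⊓ y)) (b₁ := c x) (b₂ := c y)
      (abs_le.2 ⟨by linarith, by linarith⟩) (abs_le.2 ⟨by linarith, by linarith⟩)
  | add P Q hP hQ =>
    simp only [map_add]
    convert add_mem hP hQ using 2 <;> ext z <;> exact add_add_add_comm _ _ _ _

end Ferromagnetic

section Marginals

variable {ι : Type*}

lemma lintegral_pi_mul_lintegral_pi {κ α β : Type*} [Fintype κ] [MeasurableSpace α]
    [MeasurableSpace β] (μ : κ → Measure α) (ν : κ → Measure β) [∀ i, SigmaFinite (μ i)]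
    [∀ i, SigmaFinite (ν i)] {f : (κ → α) → ℝ≥0∞} {g : (κ → β) → ℝ≥0∞} (hf : Measurable f)
    (hg : Measurable g) :
    (∫⁻ u, f u ∂Measure.pi μ) * ∫⁻ v, g v ∂Measure.pi ν =
      ∫⁻ z, f (fun i => (z i).1) * g (fun i => (z i).2)
        ∂(Measure.pi fun i => (μ i).prod (ν i)) := by
  rw [← lintegral_prod_mul hf.aemeasurable hg.aemeasurable,
    ← (measurePreserving_arrowProdEquivProdArrow α β κ μ ν).lintegral_comp (by fun_prop)]
  rfl

lemma measurable_aeval [Countable ι] (P : MvPolynomial ι ℝ≥0) :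
    Measurable fun x : ι → ℝ => MvPolynomial.aeval x P := by
  simp_rw [MvPolynomial.aeval_def, ← MvPolynomial.eval_map]
  exact (MvPolynomial.continuous_eval _).measurable

/-- The Boltzmann weight `exp (P x)` of the ferromagnetic Hamiltonian `-P`, where ferromagnetic
means that all coefficients of the polynomial `P` are nonnegative. -/
noncomputable def boltzmannWeight (P : MvPolynomial ι ℝ≥0) (x : ι → ℝ) : ℝ≥0∞ :=
  ENNReal.ofReal (Real.exp (MvPolynomial.aeval x P))

@[fun_prop]
lemma measurable_boltzmannWeight [Countable ι] (P : MvPolynomial ι ℝ≥0) :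
    Measurable (boltzmannWeight P) :=
  (measurable_aeval P).exp.ennreal_ofReal

theorem lmarginal_boltzmannWeight_mul_le [Finite ι] [DecidableEq ι] (μ : ι → Measure ℝ)
    [∀ i, SigmaFinite (μ i)] {t : Finset ι} (hμ : ∀ i ∈ t, (μ i).IsNegInvariant)
    (P R : MvPolynomial ι ℝ≥0) {x y : ι → ℝ} (hx : ∀ i ∉ t, 0 ≤ x i) (hy : ∀ i ∉ t, 0 ≤ y i) :
    lmarginal μ t (boltzmannWeight (P + R)) x * lmarginal μ t (boltzmannWeight P) y ≤
      lmarginal μ t (boltzmannWeight (P + R)) (x ⊔ y) *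
        lmarginal μ t (boltzmannWeight P) (x ⊓ y) := by
  have (i : t) : (μ i).IsNegInvariant := hμ i i.2
  let H (v w : ι → ℝ) (z : t → ℝ × ℝ) : ℝ :=
    MvPolynomial.aeval (Function.updateFinset v t fun i => (z i).1) (P + R) +
      MvPolynomial.aeval (Function.updateFinset w t fun i => (z i).2) P
  have measurable_slice (Q : MvPolynomial ι ℝ≥0) (v : ι → ℝ) :
      Measurable fun u : t → ℝ => MvPolynomial.aeval (Function.updateFinset v t u) Q :=
    (measurable_aeval Q).comp measurable_updateFinset
  have measurable_H (v w : ι → ℝ) : Measurable (H v w) :=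
    .add ((measurable_slice (P + R) v).comp (by fun_prop))
      ((measurable_slice P w).comp (by fun_prop))
  have duplicate (v w : ι → ℝ) :
      lmarginal μ t (boltzmannWeight (P + R)) v * lmarginal μ t (boltzmannWeight P) w =
        ∫⁻ z, ENNReal.ofReal (Real.exp (H v w z))
          ∂(Measure.pi fun i : t => (μ i).prod (μ i)) := by
    simp only [lmarginal, boltzmannWeight, H, Real.exp_add, ENNReal.ofReal_mul (Real.exp_pos _).le]
    exact lintegral_pi_mul_lintegral_pi (fun i : t => μ i) (fun i : t => μ i)
      (measurable_slice (P + R) v).exp.ennreal_ofReal (measurable_slice P w).exp.ennreal_ofReal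
  rw [duplicate, duplicate]
  refine lintegral_exp_le_of_mem_dominatingPairs _ (measurable_H _ _) (measurable_H _ _) ?_
  convert add_mem (aeval_sup_add_aeval_inf_mem_dominatingPairs P t hx hy)
    (aeval_mem_dominatingPairs R t hx (le_sup_left : x ≤ x ⊔ y)) using 2 <;>
  · ext z
    simp only [H, map_add, Prod.fst_add, Prod.snd_add, Pi.add_apply]
    ring

end Marginals

section Tilted

lemma tilted_eq_inv_smul_withDensity {α : Type*} [MeasurableSpace α] {μ : Measure α} {f : α → ℝ}
    (hf : Integrable (fun x => Real.exp (f x)) μ) :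
    μ.tilted f = (∫⁻ x, ENNReal.ofReal (Real.exp (f x)) ∂μ)⁻¹ •
      μ.withDensity fun x => ENNReal.ofReal (Real.exp (f x)) := by
  rcases eq_zero_or_neZero μ with rfl | _
  · simp
  rw [← ofReal_integral_eq_lintegral_ofReal hf (.of_forall fun _ => (Real.exp_pos _).le),
    ← withDensity_smul' _ _ (by simp [integral_exp_pos hf]), Measure.tilted]
  congr with x
  simp [ENNReal.ofReal_div_of_pos (integral_exp_pos hf), ENNReal.div_eq_inv_mul]

lemma lintegral_tilted_eq_inv_mul {α : Type*} [MeasurableSpace α] {μ : Measure α} {f : α → ℝ}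
    (hf : Integrable (fun x => Real.exp (f x)) μ) (hfm : Measurable f) {g : α → ℝ≥0∞}
    (hg : Measurable g) :
    ∫⁻ x, g x ∂μ.tilted f = (∫⁻ x, ENNReal.ofReal (Real.exp (f x)) ∂μ)⁻¹ *
      ∫⁻ x, g x * ENNReal.ofReal (Real.exp (f x)) ∂μ := by
  rw [tilted_eq_inv_smul_withDensity hf, lintegral_smul_measure,
    lintegral_withDensity_eq_lintegral_mul _ hfm.exp.ennreal_ofReal hg]
  simp_rw [Pi.mul_apply, mul_comm _ (g _), smul_eq_mul]

lemma lintegral_ofReal_exp_ne_zero {α : Type*} [MeasurableSpace α] {μ : Measure α} [NeZero μ]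
    {f : α → ℝ} (hf : Integrable (fun x => Real.exp (f x)) μ) :
    ∫⁻ x, ENNReal.ofReal (Real.exp (f x)) ∂μ ≠ 0 := by
  rw [← ofReal_integral_eq_lintegral_ofReal hf (.of_forall fun _ => (Real.exp_pos _).le)]
  simpa using integral_exp_pos hf

lemma inv_mul_le_inv_mul_of_mul_le_mul {a b c d : ℝ≥0∞} (hb₀ : b ≠ 0) (hb : b ≠ ⊤) (hd₀ : d ≠ 0)
    (hd : d ≠ ⊤) (h : a * d ≤ c * b) : b⁻¹ * a ≤ d⁻¹ * c := by
  rw [← ENNReal.div_eq_inv_mul, ← ENNReal.div_eq_inv_mul, ENNReal.div_le_iff hb₀ hb,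
    ← ENNReal.mul_div_right_comm, ENNReal.le_div_iff_mul_le (.inl hd₀) (.inl hd)]
  exact h

theorem lintegral_tilted_aeval_mono {ι : Type*} [Fintype ι] (μ : ι → Measure ℝ)
    [∀ i, SigmaFinite (μ i)] {s : Finset ι} (hpos : ∀ i ∈ s, ∀ᵐ u ∂μ i, 0 ≤ u)
    (hneg : ∀ i ∉ s, (μ i).IsNegInvariant) {P R : MvPolynomial ι ℝ≥0}
    (hP : Integrable (fun x => Real.exp (MvPolynomial.aeval x P)) (Measure.pi μ))
    (hPR : Integrable (fun x => Real.exp (MvPolynomial.aeval x (P + R))) (Measure.pi μ))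
    {h : (ι → ℝ) → ℝ≥0∞} (hh : Measurable h)
    (hmono : ∀ x y, (∀ i ∈ s, x i ≤ y i) → h x ≤ h y) :
    ∫⁻ x, h x ∂(Measure.pi μ).tilted (fun x => MvPolynomial.aeval x P) ≤
      ∫⁻ x, h x ∂(Measure.pi μ).tilted (fun x => MvPolynomial.aeval x (P + R)) := by
  rcases eq_zero_or_neZero (Measure.pi μ) with h₀ | _
  · simp [h₀]
  rw [lintegral_tilted_eq_inv_mul hP (measurable_aeval P) hh,
    lintegral_tilted_eq_inv_mul hPR (measurable_aeval (P + R)) hh]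
  refine inv_mul_le_inv_mul_of_mul_le_mul (lintegral_ofReal_exp_ne_zero hP)
    hP.lintegral_lt_top.ne (lintegral_ofReal_exp_ne_zero hPR) hPR.lintegral_lt_top.ne ?_
  refine lintegral_mul_lintegral_le_of_lmarginal μ (S := fun i => {u | i ∈ s → 0 ≤ u})
    (fun i => ⟨0, fun _ => le_rfl⟩) (fun i hi => (hpos i hi).mono fun u hu _ => hu) hh
    (measurable_boltzmannWeight P) (measurable_boltzmannWeight (P + R)) hmono fun x hx y hy => ?_
  have ginibre := lmarginal_boltzmannWeight_mul_le μ (t := sᶜ)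
    (fun i hi => hneg i (Finset.mem_compl.1 hi)) P R (x := y) (y := x)
    (fun i hi => hy i trivial (by simpa using hi)) (fun i hi => hx i trivial (by simpa using hi))
  rwa [mul_comm, sup_comm, inf_comm]

end Tilted

section GaussianMoments

/-- `μ` integrates `exp (b * u ^ 2)` for every `b`. This is the growth condition under which every
quadratic Hamiltonian with single-site measures `μ` has a finite partition function. -/
def HasGaussianMoments (μ : Measure ℝ) : Prop :=
  ∀ b : ℝ, Integrable (fun u => Real.exp (b * u ^ 2)) μ

lemma HasGaussianMoments.of_lintegral_lt_top {μ : Measure ℝ}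
    (hμ : ∀ b : ℝ, 0 < b → ∫⁻ u, ENNReal.ofReal (Real.exp (b * u ^ 2)) ∂μ < ⊤) :
    HasGaussianMoments μ := fun b => by
  have integrable_abs : Integrable (fun u => Real.exp ((|b| + 1) * u ^ 2)) μ :=
    (lintegral_ofReal_ne_top_iff_integrable (by fun_prop)
      (.of_forall fun u => (Real.exp_pos _).le)).1 (hμ _ (by positivity)).ne
  refine integrable_abs.mono' (by fun_prop) (.of_forall fun u => ?_)
  rw [Real.norm_of_nonneg (Real.exp_pos _).le]
  gcongr
  linarith [le_abs_self b]

lemma HasGaussianMoments.isFiniteMeasure {μ : Measure ℝ} (hμ : HasGaussianMoments μ) :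
    IsFiniteMeasure μ := by
  simpa [integrable_const_iff] using hμ 0

lemma HasGaussianMoments.rhoMod {ρ : Measure ℝ} (hρ : HasGaussianMoments ρ) (a : ℝ) :
    HasGaussianMoments (rhoMod ρ a) := fun b => by
  rw [_root_.rhoMod, integrable_withDensity_iff_integrable_smul' (by fun_prop) (by simp)]
  simpa [ENNReal.toReal_ofReal (Real.exp_pos _).le, ← Real.exp_add, ← add_mul] using hρ (a + b)

lemma HasGaussianMoments.map_add_const {μ : Measure ℝ} (hμ : HasGaussianMoments μ) (B : ℝ) :
    HasGaussianMoments (μ.map (· + B)) := fun b => by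
  rw [integrable_map_measure (by fun_prop) (by fun_prop)]
  refine ((hμ (2 * |b|)).const_mul (Real.exp (2 * |b| * B ^ 2))).mono' (by fun_prop)
    (.of_forall fun u => ?_)
  rw [Function.comp_apply, Real.norm_of_nonneg (Real.exp_pos _).le, ← Real.exp_add]
  gcongr
  calc b * (u + B) ^ 2 ≤ |b| * (2 * (u ^ 2 + B ^ 2)) :=
        mul_le_mul (le_abs_self b) add_sq_le (sq_nonneg _) (abs_nonneg b)
    _ = 2 * |b| * B ^ 2 + 2 * |b| * u ^ 2 := by ring

lemma HasGaussianMoments.zetaM {ρ : Measure ℝ} (hρ : HasGaussianMoments ρ) (a B : ℝ) :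
    HasGaussianMoments (zetaM ρ a B) := fun b =>
  ((hρ.rhoMod a).map_add_const B b).mono_measure Measure.restrict_le_self

lemma ae_nonneg_zetaM (ρ : Measure ℝ) (a : ℝ) {B : ℝ} (hB : 0 ≤ B) : ∀ᵐ u ∂zetaM ρ a B, 0 ≤ u :=
  (ae_restrict_mem measurableSet_Ici).mono fun _ hu => hB.trans hu

lemma HasGaussianMoments.integrable_exp_pi {ι : Type*} [Fintype ι] {μ : ι → Measure ℝ}
    (hμ : ∀ i, HasGaussianMoments (μ i)) {H : (ι → ℝ) → ℝ} (hH : Measurable H) {C : ℝ}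
    (hHC : ∀ x, H x ≤ C * ∑ i, x i ^ 2) :
    Integrable (fun x => Real.exp (H x)) (Measure.pi μ) := by
  have (i : ι) := (hμ i).isFiniteMeasure
  refine (Integrable.fintype_prod fun i => hμ i C).mono' (by fun_prop) (.of_forall fun x => ?_)
  rw [Real.norm_of_nonneg (Real.exp_pos _).le, ← Real.exp_sum, ← Finset.mul_sum]
  exact Real.exp_le_exp.2 (hHC x)

end GaussianMoments

section Gibbs

variable {V : Type*} {J : V → V → ℝ} {Λ Λ' : Finset V}

lemma Jnn_nonneg (G : SimpleGraph V) (x y : V) : 0 ≤ Jnn G x y := by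
  unfold Jnn
  positivity

lemma sum_sum_mul_mul_le {ι : Type*} [Fintype ι] (c : ι → ι → ℝ) (x : ι → ℝ) :
    ∑ i, ∑ j, c i j * x i * x j ≤ (∑ i, ∑ j, |c i j|) * ∑ k, x k ^ 2 := by
  have sq_le (i : ι) : x i ^ 2 ≤ ∑ k, x k ^ 2 :=
    Finset.single_le_sum (f := fun k => x k ^ 2) (fun k _ => sq_nonneg (x k)) (Finset.mem_univ i)
  simp_rw [Finset.sum_mul _ _ (∑ k, x k ^ 2)]
  refine Finset.sum_le_sum fun i _ => Finset.sum_le_sum fun j _ => ?_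
  calc c i j * x i * x j ≤ |c i j| * |x i * x j| := by
        rw [← abs_mul, ← mul_assoc]
        exact le_abs_self _
    _ ≤ |c i j| * ∑ k, x k ^ 2 := by
        gcongr
        rw [abs_le]
        constructor <;> nlinarith [sq_le i, sq_le j, sq_nonneg (x i + x j), sq_nonneg (x i - x j)]

lemma hamil_zero (J : V → V → ℝ) (β : ℝ) (φ : Λ → ℝ) :
    hamil J β Λ 0 φ = ∑ x : Λ, ∑ y : Λ, (if x ≠ y then β * J x y / 2 else 0) * φ x * φ y := by
  simp only [hamil, Pi.zero_apply, mul_zero, tsum_zero, Finset.sum_const_zero, add_zero,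
    Finset.mul_sum, ne_eq, Subtype.ext_iff]
  refine Finset.sum_congr rfl fun x _ => Finset.sum_congr rfl fun y _ => ?_
  split_ifs <;> ring

lemma integrable_exp_hamil_zero {ρF : V → Measure ℝ} (J : V → V → ℝ) (β : ℝ)
    (hρF : ∀ x ∈ Λ, HasGaussianMoments (ρF x)) :
    Integrable (fun φ => Real.exp (hamil J β Λ 0 φ)) (Measure.pi fun x : Λ => ρF x) := by
  simp_rw [hamil_zero]
  exact HasGaussianMoments.integrable_exp_pi (fun x : Λ => hρF x x.2) (by fun_prop)
    (sum_sum_mul_mul_le _)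

/-- The pair interaction `(1 / 2) * ∑ x ≠ y, J x y * φ x * φ y` with zero boundary conditions, as a
polynomial in the spins of `Λ`. Negative couplings are truncated to `0`, so that the polynomial is
ferromagnetic by construction. -/
noncomputable def pairInteraction (J : V → V → ℝ) (Λ : Finset V) : MvPolynomial Λ ℝ≥0 :=
  ∑ x : Λ, ∑ y : Λ, MvPolynomial.C (if x ≠ y then (J x y).toNNReal / 2 else 0) *
    MvPolynomial.X x * MvPolynomial.X y

lemma hamil_zero_eq_aeval (hJ : ∀ x y, 0 ≤ J x y) (β : ℝ≥0) (φ : Λ → ℝ) :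
    hamil J β Λ 0 φ = MvPolynomial.aeval φ (β • pairInteraction J Λ) := by
  simp only [hamil_zero, pairInteraction, map_smul, map_sum, map_mul, MvPolynomial.aeval_C,
    MvPolynomial.aeval_X, NNReal.smul_def, smul_eq_mul, Finset.mul_sum]
  refine Finset.sum_congr rfl fun x _ => Finset.sum_congr rfl fun y _ => ?_
  split_ifs
  · simp [NNReal.algebraMap_eq_coe, hJ]
    ring
  · simp

lemma gibbsV_eq_tilted {ρF : V → Measure ℝ} {β : ℝ} {ξ : V → ℝ}
    (h : Integrable (fun φ => Real.exp (hamil J β Λ ξ φ)) (Measure.pi fun x : Λ => ρF x)) :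
    gibbsV J β ρF Λ ξ = (Measure.pi fun x : Λ => ρF x).tilted (hamil J β Λ ξ) := by
  rw [tilted_eq_inv_smul_withDensity h, gibbsV, withDensity_apply _ .univ, Measure.restrict_univ]

lemma StochDom.of_lintegral_le {ι : Type*} {μ ν : Measure (ι → ℝ)} [IsProbabilityMeasure μ]
    [IsProbabilityMeasure ν]
    (h : ∀ f : (ι → ℝ) → ℝ≥0∞, Measurable f → Monotone f → ∫⁻ x, f x ∂μ ≤ ∫⁻ x, f x ∂ν) :
    StochDom μ ν := by
  rintro g hg hmono ⟨K, hK⟩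
  have integrable_g (π : Measure (ι → ℝ)) [IsProbabilityMeasure π] : Integrable g π :=
    .of_bound hg.aestronglyMeasurable K (.of_forall hK)
  have integral_g (π : Measure (ι → ℝ)) [IsProbabilityMeasure π] :
      ∫ x, g x ∂π = (∫⁻ x, ENNReal.ofReal (g x + K) ∂π).toReal - K := by
    rw [← integral_eq_lintegral_of_nonneg_ae
      (.of_forall fun x => neg_le_iff_add_nonneg.1 (neg_le_of_abs_le (hK x))) (by fun_prop),
      integral_add (integrable_g π) (integrable_const K)]
    simp
  rw [integral_g μ, integral_g ν]
  have lintegral_le := h (fun x => ENNReal.ofReal (g x + K)) (by fun_prop) fun x y hxy =>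
    ENNReal.ofReal_le_ofReal (add_le_add_left (hmono hxy) K)
  exact sub_le_sub_right (ENNReal.toReal_mono
    ((integrable_g ν).add (integrable_const K)).lintegral_lt_top.ne lintegral_le) K

theorem stmt19_general {ρF : V → Measure ℝ} (hJ : ∀ x y, 0 ≤ J x y) (hΛ : Λ' ⊆ Λ)
    (hmom : ∀ x ∈ Λ, HasGaussianMoments (ρF x)) (hpos : ∀ x ∈ Λ', ∀ᵐ u ∂ρF x, 0 ≤ u)
    (heven : ∀ x ∈ Λ, x ∉ Λ' → (ρF x).IsNegInvariant) {β β' : ℝ} (hβ : 0 ≤ β) (hββ' : β ≤ β') :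
    StochDom (marg hΛ (gibbsV J β ρF Λ 0)) (marg hΛ (gibbsV J β' ρF Λ 0)) := by
  lift β to ℝ≥0 using hβ
  obtain ⟨r, rfl⟩ : ∃ r : ℝ≥0, β' = (β + r : ℝ≥0) := ⟨(β' - β).toNNReal, by simp [hββ']⟩
  have (x : Λ) : IsFiniteMeasure (ρF x) := (hmom x x.2).isFiniteMeasure
  have integrable_exp (b : ℝ≥0) := integrable_exp_hamil_zero J b hmom
  rw [gibbsV_eq_tilted (integrable_exp _), gibbsV_eq_tilted (integrable_exp _), marg, marg]
  simp only [funext (hamil_zero_eq_aeval hJ _)] at integrable_exp ⊢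
  rcases eq_zero_or_neZero (Measure.pi fun x : Λ => ρF x) with h₀ | _
  · intro g _ _ _
    simp [h₀]
  have measurable_restrict : Measurable fun (φ : Λ → ℝ) (x : Λ') => φ ⟨x, hΛ x.2⟩ := by fun_prop
  have (b : ℝ≥0) := isProbabilityMeasure_tilted (integrable_exp b)
  have (b : ℝ≥0) := Measure.isProbabilityMeasure_map
    (μ := (Measure.pi fun x : Λ => ρF x).tilted (MvPolynomial.aeval · (b • pairInteraction J Λ)))
    measurable_restrict.aemeasurable
  refine .of_lintegral_le fun f hf hmono => ?_
  rw [lintegral_map hf measurable_restrict, lintegral_map hf measurable_restrict]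
  have integrable_exp_add := integrable_exp (β + r)
  rw [add_smul] at integrable_exp_add ⊢
  exact lintegral_tilted_aeval_mono _ (s := {x | x.1 ∈ Λ'}) (by simpa using fun x _ => hpos x)
    (by simpa using heven) (integrable_exp β) integrable_exp_add (hf.comp measurable_restrict)
    fun φ ψ h => hmono fun x => h _ (by simp)

end Gibbs

/-- Lemma `Lemma: beta monotonicity`: monotonicity in `β` of the
boundary-layer marginal. Let `G` be a connected graph of degree at most `D`, `ρ` an
even measure with all Gaussian moments, `Λ` a finite set, and let `ρ̃` equal `ζ_{a,B}`
on `∂Λ` and `ρ` on `Λ ∖ ∂Λ` (for arbitrary fixed `a, B > 0`). Then for `β' ≥ β ≥ 0`,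
the `∂Λ`-marginal of `ν^0_{Λ,β,ρ̃}` is stochastically dominated by the `∂Λ`-marginal
of `ν^0_{Λ,β',ρ̃}`. -/
theorem stmt19 {V : Type*} [Countable V] (G : SimpleGraph V) (hconn : G.Connected)
    [∀ x : V, Fintype (G.neighborSet x)] (D : ℕ) (hD : 0 < D)
    (hdeg : ∀ x : V, G.degree x ≤ D)
    (ρ : Measure ℝ) (hρeven : ρ.map (fun u => -u) = ρ)
    (hρ : ∀ a : ℝ, 0 < a →
      0 < ∫⁻ u, ENNReal.ofReal (Real.exp (a * u ^ 2)) ∂ρ ∧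
      ∫⁻ u, ENNReal.ofReal (Real.exp (a * u ^ 2)) ∂ρ < ⊤)
    (a B : ℝ) (ha : 0 < a) (hB : 0 < B)
    (Λ : Finset V) (β β' : ℝ) (hβ : 0 ≤ β) (hββ' : β ≤ β') :
    StochDom
      (marg (show bdry G Λ ⊆ Λ from Finset.filter_subset _ _) (gibbsV (Jnn G) β
        (fun x => if x ∈ bdry G Λ then zetaM ρ a B else ρ) Λ 0))
      (marg (show bdry G Λ ⊆ Λ from Finset.filter_subset _ _) (gibbsV (Jnn G) β'
        (fun x => if x ∈ bdry G Λ then zetaM ρ a B else ρ) Λ 0)) := by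
  have hmom : HasGaussianMoments ρ := .of_lintegral_lt_top fun b hb => (hρ b hb).2
  refine stmt19_general (Jnn_nonneg G) _ (fun x _ => ?_) (fun x hx => ?_) (fun x _ hx => ?_) hβ hββ'
  · split_ifs
    exacts [hmom.zetaM a B, hmom]
  · simpa only [if_pos hx] using ae_nonneg_zetaM ρ a hB.le
  · simpa only [if_neg hx] using ⟨hρeven⟩
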